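/- Under the two-set greedy algorithm, if d_n(F) ≤ C₀ e^{−c₀ n^{α}} for all n = 1, 2, … for some constants C₀ > 0, c₀ > 0 and α > 0, then σ_n(F̃) ≤ √(2C₀) · e^{−c₁ n^{α}} for all n = 1, 2, …, where c₁ := 2^{−1−2α} c₀ < c₀. -/

import Mathlib

/-!
The Gram determinant of `v₁, …, v_K` is the product of the squared distances of each vector to the
span of its predecessors; for greedy vectors, each factor up to index `n` is at least `σ_n ^ 2`.
On the other hand, a subspace `Y` splits the Gram matrix as `Rᴴ * R + B`, where `R` has only `dim Y`
rows and `B` is the Gram matrix of the components orthogonal to `Y`. Damping `Rᴴ * R` by a factor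
`t ∈ [0, 1]` decreases the determinant at most by the factor `t ^ dim Y`. If all vectors have norm
at most `1` and lie within `δ` of `Y`, then damping by `t = δ ^ 2` leaves a matrix of trace at most
`2 * K * δ ^ 2`, so that `(δ ^ 2) ^ dim Y * (σ_n ^ 2) ^ K ≤ (2 * δ ^ 2) ^ K` by the inequality of
arithmetic and geometric means applied to the eigenvalues. With `dim Y ≤ m = ⌈n / 2⌉` and
`K = 2 * m` this gives `σ_n ^ 2 ≤ 2 * δ`, hence `σ_n ^ 2 ≤ 2 * d_m`.
-/

section Determinant

open Matrix
open scoped ComplexOrder MatrixOrder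

variable {𝕜 m n : Type*} [RCLike 𝕜] [Fintype m] [Fintype n] [DecidableEq n]

theorem det_le_trace_div_card_pow {A : Matrix n n 𝕜} (hA : A.PosSemidef) :
    A.det ≤ (A.trace / Fintype.card n) ^ Fintype.card n := by
  cases isEmpty_or_nonempty n
  · simp
  have hcard : Fintype.card n ≠ 0 := Fintype.card_ne_zero
  have hprod : 0 ≤ ∏ i, hA.1.eigenvalues i := Finset.prod_nonneg fun i _ ↦ hA.eigenvalues_nonneg i
  have amgm : (∏ i, hA.1.eigenvalues i) ^ (Fintype.card n : ℝ)⁻¹ ≤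
      (∑ i, hA.1.eigenvalues i) / Fintype.card n := by
    simpa using Real.geom_mean_le_arith_mean Finset.univ (fun _ ↦ 1) hA.1.eigenvalues
      (by simp) (by simp [Fintype.card_pos]) fun i _ ↦ hA.eigenvalues_nonneg i
  have prod_le : ∏ i, hA.1.eigenvalues i ≤
      ((∑ i, hA.1.eigenvalues i) / Fintype.card n) ^ Fintype.card n := by
    grw [← amgm, Real.rpow_inv_natCast_pow hprod hcard]
  rw [hA.1.det_eq_prod_eigenvalues, hA.1.trace_eq_sum_eigenvalues]
  exact_mod_cast prod_le

theorem pow_card_le_det_of_algebraMap_le {A : Matrix n n 𝕜} {t : ℝ} (ht : 0 ≤ t)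
    (h : algebraMap ℝ (Matrix n n 𝕜) t ≤ A) : (t : 𝕜) ^ Fintype.card n ≤ A.det := by
  have hA : A.PosSemidef := ((algebraMap_nonneg _ ht).trans h).posSemidef
  have le_eigenvalues (i : n) : t ≤ hA.1.eigenvalues i :=
    (algebraMap_le_iff_le_spectrum hA.1.isSelfAdjoint).1 h _ (hA.1.eigenvalues_mem_spectrum_real i)
  have le_prod : t ^ Fintype.card n ≤ ∏ i, hA.1.eigenvalues i := by
    simpa using Finset.prod_le_prod (fun _ _ ↦ ht) fun i (_ : i ∈ Finset.univ) ↦ le_eigenvalues i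
  rw [hA.1.det_eq_prod_eigenvalues]
  exact_mod_cast le_prod

theorem posSemidef_one_sub_mul_inv_mul_conjTranspose_iff [DecidableEq m] {G : Matrix n n 𝕜}
    (hG : G.PosDef) (R : Matrix m n 𝕜) :
    (1 - R * G⁻¹ * Rᴴ).PosSemidef ↔ (G - Rᴴ * R).PosSemidef := by
  have := hG.isUnit.invertible
  have := invertibleOne (α := Matrix m m 𝕜)
  simpa using (PosDef.fromBlocks₁₁ Rᴴ 1 hG).symm.trans (PosDef.fromBlocks₂₂ G Rᴴ .one)

theorem pow_card_mul_det_le_det_smul_add (R : Matrix m n 𝕜) {B : Matrix n n 𝕜}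
    (hB : B.PosSemidef) {t : ℝ} (ht₀ : 0 ≤ t) (ht₁ : t ≤ 1) :
    (t : 𝕜) ^ Fintype.card m * (Rᴴ * R + B).det ≤ (t • (Rᴴ * R) + B).det := by
  classical
  have hR := posSemidef_conjTranspose_mul_self R
  set G := Rᴴ * R + B
  have hG : G.PosSemidef := hR.add hB
  by_cases hdet : G.det = 0
  · simpa [hdet] using ((hR.smul ht₀).add hB).det_nonneg
  have hschur : (1 - R * G⁻¹ * Rᴴ).PosSemidef := by
    rw [posSemidef_one_sub_mul_inv_mul_conjTranspose_iff (hG.posDef_iff_det_ne_zero.2 hdet)]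
    simpa [G] using hB
  -- By the matrix determinant lemma, the ratio of the two determinants is the determinant of a
  -- convex combination of `1` and the Schur complement `1 - R * G⁻¹ * Rᴴ`.
  calc (t : 𝕜) ^ Fintype.card m * G.det
      ≤ (algebraMap ℝ _ t + (1 - t) • (1 - R * G⁻¹ * Rᴴ)).det * G.det := by
        gcongr
        · exact hG.det_nonneg
        · exact pow_card_le_det_of_algebraMap_le ht₀ <| le_add_of_nonneg_right
            (hschur.smul (sub_nonneg.2 ht₁)).nonneg
    _ = G.det * (1 + R * G⁻¹ * (-(1 - t) • Rᴴ)).det := by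
        rw [mul_comm, Algebra.algebraMap_eq_smul_one, Matrix.mul_smul]
        congr 2
        module
    _ = (G + (-(1 - t) • Rᴴ) * R).det := (det_add_mul _ _ (Ne.isUnit hdet)).symm
    _ = (t • (Rᴴ * R) + B).det := by
        rw [Matrix.smul_mul]
        congr 1
        simp only [G]
        module

end Determinant

section InnerProductSpace

open Matrix InnerProductSpace
open scoped ComplexOrder

variable {𝕜 E ι : Type*} [RCLike 𝕜] [NormedAddCommGroup E] [InnerProductSpace 𝕜 E]

theorem infDist_eq_norm_sub_of_mem_orthogonal {K : Submodule 𝕜 E} {x y : E} (hy : y ∈ K)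
    (hxy : x - y ∈ Kᗮ) : Metric.infDist x K = ‖x - y‖ := by
  rw [Metric.infDist_eq_iInf, (K.norm_eq_iInf_iff_inner_eq_zero hy).2
    fun w hw ↦ K.inner_left_of_mem_orthogonal hw hxy]
  simp only [dist_eq_norm, SetLike.coe_sort_coe]

theorem infDist_eq_norm_starProjection_orthogonal (K : Submodule 𝕜 E) [K.HasOrthogonalProjection]
    (x : E) : Metric.infDist x K = ‖Kᗮ.starProjection x‖ := by
  rw [infDist_eq_norm_sub_of_mem_orthogonal (K.starProjection_apply_mem x)
    (K.sub_starProjection_mem_orthogonal x), K.starProjection_orthogonal_val]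

theorem infDist_le_norm (K : Submodule 𝕜 E) (x : E) : Metric.infDist x K ≤ ‖x‖ := by
  simpa using Metric.infDist_le_dist_of_mem (x := x) K.zero_mem

theorem trace_gram [Fintype ι] (v : ι → E) : (gram 𝕜 v).trace = ((∑ i, ‖v i‖ ^ 2 : ℝ) : 𝕜) := by
  simp [trace, inner_self_eq_norm_sq_to_K]

theorem gram_sum_smul {κ : Type*} [Fintype ι] (C : Matrix ι κ 𝕜) (v : ι → E) :
    gram 𝕜 (fun k ↦ ∑ i, C i k • v i) = Cᴴ * gram 𝕜 v * C := by
  ext k l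
  rw [gram_apply, ← star_dotProduct_gram_mulVec, Matrix.mul_assoc]
  rfl

theorem gram_starProjection_add_gram_starProjection_orthogonal (K : Submodule 𝕜 E)
    [K.HasOrthogonalProjection] (v : ι → E) :
    gram 𝕜 (K.starProjection ∘ v) + gram 𝕜 (Kᗮ.starProjection ∘ v) = gram 𝕜 v := by
  ext i j
  simp only [Matrix.add_apply, gram_apply, Function.comp_apply,
    Submodule.inner_starProjection_left_eq_right]
  rw [K.starProjection_eq_self_iff.2 (K.starProjection_apply_mem _),
    Kᗮ.starProjection_eq_self_iff.2 (Kᗮ.starProjection_apply_mem _), ← inner_add_right,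
    K.starProjection_add_starProjection_orthogonal]

section GramSchmidt

variable [LinearOrder ι] [LocallyFiniteOrderBot ι] [WellFoundedLT ι]

theorem norm_gramSchmidt_eq_infDist (v : ι → E) (i : ι) :
    ‖gramSchmidt 𝕜 v i‖ = Metric.infDist (v i) (Submodule.span 𝕜 (v '' Set.Iio i)) := by
  set y := ∑ j ∈ Finset.Iio i, (𝕜 ∙ gramSchmidt 𝕜 v j).starProjection (v i)
  have hy : gramSchmidt 𝕜 v i = v i - y := gramSchmidt_def 𝕜 v i
  rw [← span_gramSchmidt_Iio 𝕜 v i, hy, infDist_eq_norm_sub_of_mem_orthogonal]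
  · refine Submodule.sum_mem _ fun j hj ↦ ?_
    have : 𝕜 ∙ gramSchmidt 𝕜 v j ≤ Submodule.span 𝕜 (gramSchmidt 𝕜 v '' Set.Iio i) := by
      rw [Submodule.span_singleton_le_iff_mem]
      exact Submodule.subset_span ⟨j, Finset.mem_Iio.1 hj, rfl⟩
    exact this (Submodule.starProjection_apply_mem _ _)
  · rw [← hy, ← Submodule.span_singleton_le_iff_mem]
    refine (Submodule.isOrtho_span.2 ?_).ge
    rintro _ ⟨j, hj, rfl⟩ _ rfl
    exact gramSchmidt_orthogonal 𝕜 v (ne_of_lt hj)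

theorem exists_det_eq_one_and_eq_sum_smul_gramSchmidt [Fintype ι] (v : ι → E) :
    ∃ C : Matrix ι ι 𝕜, C.det = 1 ∧ v = fun i ↦ ∑ j, C j i • gramSchmidt 𝕜 v j := by
  set g := gramSchmidt 𝕜 v
  let C : Matrix ι ι 𝕜 := of fun j i ↦ if j = i then 1 else ⟪g j, v i⟫_𝕜 / (‖g j‖ : 𝕜) ^ 2
  have hlower {i j : ι} (hij : i < j) : C j i = 0 := by
    simp [C, hij.ne', g, gramSchmidt_inv_triangular 𝕜 v hij]
  refine ⟨C, ?_, funext fun i ↦ ?_⟩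
  · have hupper : C.IsUpperTriangular := fun _ _ h ↦ hlower h
    rw [det_of_isUpperTriangular hupper]
    simp [C]
  · have hsum : ∑ j ∈ Finset.Iic i, C j i • g j = ∑ j, C j i • g j :=
      Finset.sum_subset (Finset.subset_univ _) fun j _ hj ↦ by
        rw [hlower (not_le.1 fun h ↦ hj (Finset.mem_Iic.2 h)), zero_smul]
    rw [← hsum, ← Finset.Iio_insert, Finset.sum_insert (by simp)]
    conv_lhs => rw [gramSchmidt_def'' 𝕜 v i]
    congr 1
    · simp [C, g]
    · refine Finset.sum_congr rfl fun j hj ↦ ?_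
      simp [C, g, (Finset.mem_Iio.1 hj).ne]

theorem det_gram_eq_prod_infDist_sq [Fintype ι] (v : ι → E) :
    (gram 𝕜 v).det =
      ((∏ i, Metric.infDist (v i) (Submodule.span 𝕜 (v '' Set.Iio i)) ^ 2 : ℝ) : 𝕜) := by
  have hdiag : gram 𝕜 (gramSchmidt 𝕜 v) = diagonal fun i ↦ (‖gramSchmidt 𝕜 v i‖ : 𝕜) ^ 2 := by
    ext i j
    obtain rfl | hij := eq_or_ne i j
    · simp [inner_self_eq_norm_sq_to_K]
    · simp [hij, gramSchmidt_orthogonal 𝕜 v hij]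
  obtain ⟨C, hC, hv⟩ := exists_det_eq_one_and_eq_sum_smul_gramSchmidt (𝕜 := 𝕜) v
  conv_lhs => rw [hv, gram_sum_smul, det_mul, det_mul, det_conjTranspose, hC, hdiag, det_diagonal]
  simp [← norm_gramSchmidt_eq_infDist]

theorem pow_finrank_mul_prod_infDist_sq_le [Fintype ι] (Y : Submodule 𝕜 E)
    [FiniteDimensional 𝕜 Y] (v : ι → E) {t : ℝ} (ht₀ : 0 ≤ t) (ht₁ : t ≤ 1) :
    t ^ Module.finrank 𝕜 Y * ∏ i, Metric.infDist (v i) (Submodule.span 𝕜 (v '' Set.Iio i)) ^ 2 ≤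
      ((∑ i, (t * ‖Y.starProjection (v i)‖ ^ 2 + Metric.infDist (v i) Y ^ 2)) / Fintype.card ι)
        ^ Fintype.card ι := by
  set A := gram 𝕜 (Y.starProjection ∘ v)
  set B := gram 𝕜 (Yᗮ.starProjection ∘ v)
  have hA : A.PosSemidef := posSemidef_gram 𝕜 _
  have hB : B.PosSemidef := posSemidef_gram 𝕜 _
  obtain ⟨R, hR⟩ : ∃ R : Matrix (Fin (Module.finrank 𝕜 Y)) ι 𝕜, A = Rᴴ * R :=
    ⟨_, gram_eq_conjTranspose_mul (stdOrthonormalBasis 𝕜 Y)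
      fun i ↦ Y.orthogonalProjectionOnto (v i)⟩
  have htrace : (t • A + B).trace =
      ((∑ i, (t * ‖Y.starProjection (v i)‖ ^ 2 + Metric.infDist (v i) Y ^ 2) : ℝ) : 𝕜) := by
    simp only [A, B, trace_add, trace_smul, trace_gram, Function.comp_apply,
      infDist_eq_norm_starProjection_orthogonal, Finset.sum_add_distrib, ← Finset.mul_sum,
      RCLike.real_smul_eq_coe_mul, RCLike.ofReal_add, RCLike.ofReal_mul]
  have key : (t : 𝕜) ^ Module.finrank 𝕜 Y * (gram 𝕜 v).det ≤
      ((t • A + B).trace / Fintype.card ι) ^ Fintype.card ι := by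
    refine le_trans ?_ (det_le_trace_div_card_pow ((hA.smul ht₀).add hB))
    rw [← gram_starProjection_add_gram_starProjection_orthogonal Y v]
    simpa [A, B, hR] using pow_card_mul_det_le_det_smul_add R hB ht₀ ht₁
  rw [det_gram_eq_prod_infDist_sq, htrace] at key
  exact_mod_cast key

theorem pow_finrank_mul_prod_infDist_sq_le_two_mul_sq_pow [Fintype ι] [Nonempty ι]
    (Y : Submodule 𝕜 E) [FiniteDimensional 𝕜 Y] {v : ι → E} (hv : ∀ i, ‖v i‖ ≤ 1)
    {δ : ℝ} (hδ₀ : 0 ≤ δ) (hδ₁ : δ ≤ 1) (hY : ∀ i, Metric.infDist (v i) Y ≤ δ) :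
    (δ ^ 2) ^ Module.finrank 𝕜 Y *
        ∏ i, Metric.infDist (v i) (Submodule.span 𝕜 (v '' Set.Iio i)) ^ 2 ≤
      (2 * δ ^ 2) ^ Fintype.card ι := by
  have hterm (i : ι) :
      δ ^ 2 * ‖Y.starProjection (v i)‖ ^ 2 + Metric.infDist (v i) Y ^ 2 ≤ 2 * δ ^ 2 :=
    calc δ ^ 2 * ‖Y.starProjection (v i)‖ ^ 2 + Metric.infDist (v i) Y ^ 2
        ≤ δ ^ 2 * 1 ^ 2 + δ ^ 2 := by
          gcongr
          · exact (Y.norm_starProjection_apply_le _).trans (hv i)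
          · exact Metric.infDist_nonneg
          · exact hY i
      _ = 2 * δ ^ 2 := by ring
  refine (pow_finrank_mul_prod_infDist_sq_le Y v (sq_nonneg δ) (pow_le_one₀ hδ₀ hδ₁)).trans ?_
  gcongr
  rw [div_le_iff₀' (by simp [Fintype.card_pos])]
  simpa using Finset.sum_le_sum fun i (_ : i ∈ Finset.univ) ↦ hterm i

theorem sq_le_two_mul_of_forall_le_infDist [Fintype ι] [Nonempty ι] (Y : Submodule 𝕜 E)
    [FiniteDimensional 𝕜 Y] (hcard : 2 * Module.finrank 𝕜 Y ≤ Fintype.card ι) {v : ι → E}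
    (hv : ∀ i, ‖v i‖ ≤ 1) {s δ : ℝ} (hs : 0 ≤ s)
    (hsv : ∀ i, s ≤ Metric.infDist (v i) (Submodule.span 𝕜 (v '' Set.Iio i))) (hδ : 0 < δ)
    (hY : ∀ i, Metric.infDist (v i) Y ≤ δ) : s ^ 2 ≤ 2 * δ := by
  obtain hδ₁ | hδ₁ := le_total 1 δ
  · have i := Classical.arbitrary ι
    have hs₁ : s ≤ 1 := ((hsv i).trans (infDist_le_norm _ _)).trans (hv i)
    linarith [pow_le_one₀ hs hs₁ (n := 2)]
  have hpow : (δ * s ^ 2) ^ Fintype.card ι ≤ (2 * δ ^ 2) ^ Fintype.card ι :=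
    calc (δ * s ^ 2) ^ Fintype.card ι
        = δ ^ Fintype.card ι * ∏ _i : ι, s ^ 2 := by simp [mul_pow]
      _ ≤ (δ ^ 2) ^ Module.finrank 𝕜 Y *
            ∏ i, Metric.infDist (v i) (Submodule.span 𝕜 (v '' Set.Iio i)) ^ 2 := by
          rw [← pow_mul]
          gcongr ?_ * ∏ i, ?_ ^ 2 with i
          · exact pow_le_pow_of_le_one hδ.le hδ₁ hcard
          · exact hsv i
      _ ≤ (2 * δ ^ 2) ^ Fintype.card ι :=
          pow_finrank_mul_prod_infDist_sq_le_two_mul_sq_pow Y hv hδ.le hδ₁ hY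
  have hbase : δ * s ^ 2 ≤ 2 * δ ^ 2 :=
    le_of_pow_le_pow_left₀ Fintype.card_ne_zero (by positivity) hpow
  exact le_of_mul_le_mul_left (hbase.trans_eq (by ring)) hδ

end GramSchmidt
end InnerProductSpace

section Greedy

variable {𝕜 E : Type*} [RCLike 𝕜] [NormedAddCommGroup E] [InnerProductSpace 𝕜 E]

/-- The deviation `sup_{g ∈ S} dist(g, Y)` of a set `S` from a subspace `Y`, in terms of which both
`σ_n` and `d_n` are defined. It is `0` by convention if `S` is empty or the distances are
unbounded. -/
noncomputable def deviation (S : Set E) (Y : Submodule 𝕜 E) : ℝ :=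
  ⨆ g : S, Metric.infDist (g : E) (Y : Set E)

variable (𝕜) in
/-- The Kolmogorov width `d_n(F)`: the least deviation of `F` from a subspace of dimension at most
`n`. The dimension is the cardinal `Module.rank`, since `Module.finrank` is `0` on
infinite-dimensional subspaces. -/
noncomputable def kolmogorovWidth (F : Set E) (n : ℕ) : ℝ :=
  ⨅ Y : {Y : Submodule 𝕜 E // Module.rank 𝕜 Y ≤ n}, deviation F (Y : Submodule 𝕜 E)

variable (𝕜) in
/-- The span `V_n` of the first `n` terms `f 0, …, f (n - 1)` of a sequence, so that
`σ_n(S) = deviation S (initialSpan 𝕜 f n)`. -/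
def initialSpan (f : ℕ → E) (n : ℕ) : Submodule 𝕜 E :=
  Submodule.span 𝕜 (f '' Set.Iio n)

variable (𝕜) in
/-- `f` is a possible output of the greedy algorithm on `S`: each term is a point of `S` farthest
from the span of the preceding ones. -/
structure IsGreedySequence (S : Set E) (f : ℕ → E) : Prop where
  mem (n : ℕ) : f n ∈ S
  infDist_eq_deviation (n : ℕ) :
    Metric.infDist (f n) (initialSpan 𝕜 f n) = deviation S (initialSpan 𝕜 f n)

theorem deviation_nonneg (S : Set E) (Y : Submodule 𝕜 E) : 0 ≤ deviation S Y :=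
  Real.iSup_nonneg fun _ ↦ Metric.infDist_nonneg

section Bounded

variable {S : Set E} {r : ℝ} (hS : ∀ g ∈ S, ‖g‖ ≤ r)
include hS

theorem bddAbove_range_infDist (Y : Submodule 𝕜 E) :
    BddAbove (Set.range fun g : S ↦ Metric.infDist (g : E) Y) := by
  refine ⟨r, ?_⟩
  rintro _ ⟨g, rfl⟩
  exact (infDist_le_norm Y _).trans (hS g g.2)

theorem infDist_le_deviation (Y : Submodule 𝕜 E) {g : E} (hg : g ∈ S) :
    Metric.infDist g Y ≤ deviation S Y :=
  le_ciSup (bddAbove_range_infDist hS Y) ⟨g, hg⟩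

theorem deviation_anti {Y Z : Submodule 𝕜 E} (hYZ : Y ≤ Z) : deviation S Z ≤ deviation S Y :=
  ciSup_mono (bddAbove_range_infDist hS Y) fun _ ↦
    Metric.infDist_le_infDist_of_subset hYZ ⟨0, Y.zero_mem⟩

end Bounded

theorem exists_deviation_lt_of_kolmogorovWidth_lt {F : Set E} {n : ℕ} {δ : ℝ}
    (h : kolmogorovWidth 𝕜 F n < δ) :
    ∃ Y : Submodule 𝕜 E, FiniteDimensional 𝕜 Y ∧ Module.finrank 𝕜 Y ≤ n ∧ deviation F Y < δ := by
  have : Nonempty {Y : Submodule 𝕜 E // Module.rank 𝕜 Y ≤ n} := ⟨⊥, by simp⟩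
  obtain ⟨⟨Y, hYn⟩, hY⟩ := exists_lt_of_ciInf_lt h
  have hfin : FiniteDimensional 𝕜 Y :=
    Module.rank_lt_aleph0_iff.1 (hYn.trans_lt Cardinal.natCast_lt_aleph0)
  exact ⟨Y, hfin, Module.finrank_le_of_rank_le hYn, hY⟩

theorem kolmogorovWidth_nonneg (F : Set E) (n : ℕ) : 0 ≤ kolmogorovWidth 𝕜 F n :=
  Real.iInf_nonneg fun _ ↦ deviation_nonneg F _

theorem IsGreedySequence.sq_deviation_le_two_mul_kolmogorovWidth {F S : Set E} (hSF : S ⊆ F)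
    (hF : ∀ g ∈ F, ‖g‖ ≤ 1) {f : ℕ → E} (hf : IsGreedySequence 𝕜 S f) {m n : ℕ} (hm : m ≠ 0)
    (hmn : 2 * m ≤ n + 1) :
    deviation S (initialSpan 𝕜 f n) ^ 2 ≤ 2 * kolmogorovWidth 𝕜 F m := by
  rw [← div_le_iff₀' two_pos]
  refine le_of_forall_gt_imp_ge_of_dense fun δ hδ ↦ (div_le_iff₀' two_pos).2 ?_
  obtain ⟨Y, hYfin, hYm, hY⟩ := exists_deviation_lt_of_kolmogorovWidth_lt hδ
  have : NeZero (2 * m) := ⟨by omega⟩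
  refine sq_le_two_mul_of_forall_le_infDist (v := fun i : Fin (2 * m) ↦ f i) Y (by simpa)
    (fun i ↦ hF _ (hSF (hf.mem i))) (deviation_nonneg S _) (fun i ↦ ?_)
    ((kolmogorovWidth_nonneg F m).trans_lt hδ)
    fun i ↦ (infDist_le_deviation hF Y (hSF (hf.mem i))).trans hY.le
  have hspan : Submodule.span 𝕜 ((fun j : Fin (2 * m) ↦ f j) '' Set.Iio i) =
      initialSpan 𝕜 f i := by
    rw [initialSpan, ← Fin.image_val_Iio, Set.image_image]
  rw [hspan, hf.infDist_eq_deviation]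
  exact deviation_anti (fun g hg ↦ hF g (hSF hg)) <| Submodule.span_mono <| Set.image_mono <|
    Set.Iio_subset_Iio (by omega)

theorem two_rpow_mul_rpow_le_half_rpow {x y α : ℝ} (hx : 0 ≤ x) (hxy : x ≤ 2 * y)
    (hα : 0 ≤ α) : 2 ^ (-1 - α) * x ^ α ≤ y ^ α / 2 := by
  have hy : 0 ≤ y := by linarith
  calc (2 : ℝ) ^ (-1 - α) * x ^ α ≤ 2 ^ (-1 - α) * (2 * y) ^ α := by gcongr
    _ = 2 ^ (-1 - α) * 2 ^ α * y ^ α := by rw [Real.mul_rpow two_pos.le hy, mul_assoc]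
    _ = y ^ α / 2 := by
      rw [← Real.rpow_add two_pos, sub_add_cancel, Real.rpow_neg_one]
      ring

theorem two_set_greedy_exponential_decay_general {F S : Set E} (hSF : S ⊆ F)
    (hF : ∀ g ∈ F, ‖g‖ ≤ 1) {f : ℕ → E} (hf : IsGreedySequence 𝕜 S f) {C₀ c₀ α : ℝ}
    (hc₀ : 0 ≤ c₀) (hα : 0 ≤ α)
    (hd : ∀ n : ℕ, 1 ≤ n → kolmogorovWidth 𝕜 F n ≤ C₀ * Real.exp (-c₀ * (n : ℝ) ^ α))
    {n : ℕ} (hn : 1 ≤ n) :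
    deviation S (initialSpan 𝕜 f n) ≤
      √(2 * C₀) * Real.exp (-(2 ^ (-1 - α) * c₀) * (n : ℝ) ^ α) := by
  obtain ⟨m, hm, hmn, hnm⟩ : ∃ m : ℕ, 1 ≤ m ∧ 2 * m ≤ n + 1 ∧ n ≤ 2 * m :=
    ⟨(n + 1) / 2, by omega, by omega, by omega⟩
  have hexp : -c₀ * (m : ℝ) ^ α / 2 ≤ -(2 ^ (-1 - α) * c₀) * (n : ℝ) ^ α := by
    have := two_rpow_mul_rpow_le_half_rpow n.cast_nonneg (mod_cast hnm : (n : ℝ) ≤ 2 * m) hα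
    linarith [mul_le_mul_of_nonneg_left this hc₀]
  calc deviation S (initialSpan 𝕜 f n)
      ≤ √(2 * kolmogorovWidth 𝕜 F m) := Real.le_sqrt_of_sq_le <|
        hf.sq_deviation_le_two_mul_kolmogorovWidth hSF hF (Nat.one_le_iff_ne_zero.1 hm) hmn
    _ ≤ √(2 * (C₀ * Real.exp (-c₀ * (m : ℝ) ^ α))) := by
        gcongr
        exact hd m hm
    _ = √(2 * C₀) * Real.exp (-c₀ * (m : ℝ) ^ α / 2) := by
        rw [← mul_assoc, Real.sqrt_mul' _ (Real.exp_nonneg _), Real.exp_half]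
    _ ≤ √(2 * C₀) * Real.exp (-(2 ^ (-1 - α) * c₀) * (n : ℝ) ^ α) := by gcongr

end Greedy

/-- Two-set greedy algorithm: exponential decay of the Kolmogorov widths
`d_n(F) ≤ C₀ e^{-c₀ n^α}` implies `σ_n(F̃) ≤ √(2C₀) e^{-c₁ n^α}` with
`c₁ = 2^{-1-2α} c₀ < c₀`, for all `n ≥ 1`. -/
theorem two_set_greedy_exponential_decay
    {H : Type*} [NormedAddCommGroup H] [InnerProductSpace ℝ H]
    (F Ftil : Set H) (hsub : Ftil ⊆ F) (hcomp : IsCompact F)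
    (hbound : ∀ f ∈ F, ‖f‖ ≤ 1)
    (f : ℕ → H) (hmem : ∀ n, f n ∈ Ftil)
    (hgreedy : ∀ n : ℕ,
      Metric.infDist (f n) ((Submodule.span ℝ (f '' Set.Iio n) : Submodule ℝ H) : Set H)
        = ⨆ g : Ftil, Metric.infDist (g : H)
            ((Submodule.span ℝ (f '' Set.Iio n) : Submodule ℝ H) : Set H))
    (C₀ c₀ α : ℝ) (hC₀ : 0 < C₀) (hc₀ : 0 < c₀) (hα : 0 < α)
    (hd : ∀ n : ℕ, 1 ≤ n →
      (⨅ Y : {Y : Submodule ℝ H // Module.rank ℝ Y ≤ n},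
          ⨆ g : F, Metric.infDist (g : H) ((Y : Submodule ℝ H) : Set H))
        ≤ C₀ * Real.exp (-c₀ * (n : ℝ) ^ α)) :
    ((2 : ℝ) ^ (-1 - 2 * α) * c₀ < c₀) ∧
    ∀ n : ℕ, 1 ≤ n →
      (⨆ g : Ftil, Metric.infDist (g : H)
          ((Submodule.span ℝ (f '' Set.Iio n) : Submodule ℝ H) : Set H))
        ≤ Real.sqrt (2 * C₀) * Real.exp (-((2 : ℝ) ^ (-1 - 2 * α) * c₀) * (n : ℝ) ^ α) := by
  refine ⟨mul_lt_of_lt_one_left hc₀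
    (Real.rpow_lt_one_of_one_lt_of_neg one_lt_two (by linarith)), fun n hn ↦ ?_⟩
  refine (two_set_greedy_exponential_decay_general hsub hbound ⟨hmem, hgreedy⟩ hc₀.le hα.le hd
    hn).trans ?_
  gcongr <;> linarith
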